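/- Let R be a commutative ring, A an associative R-algebra, and q ∈ R a unit. Let e, F, u, g, C ∈ A satisfy e*F − F*e = −q⁻¹·g*C, e*u = u*e, C*u = q⁻¹·u*C, and g*u = u*g. Then e commutes with [F, u]_{q⁻¹}, i.e. e*[F, u]_{q⁻¹} = [F, u]_{q⁻¹}*e. -/

import Mathlib

/-- The `a`-commutator `[x, y]_a = x*y - a • (y*x)` in an `R`-algebra. -/
def qComm {R : Type*} [CommRing R] {A : Type*} [Ring A] [Algebra R A]
    (a : R) (x y : A) : A := x * y - a • (y * x)

/-- Abstract form of `[e_γ, f_{μ+γ+ν}] = 0`: if `e*F - F*e = -q⁻¹•(g*C)`, `e` commutes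
with `u`, `C*u = q⁻¹•(u*C)` and `g` commutes with `u`, then `e` commutes with `[F,u]_{q⁻¹}`. -/
theorem e_comm_Fu {R : Type*} [CommRing R] {A : Type*} [Ring A] [Algebra R A]
    (q : Rˣ) (e F u g C : A)
    (heF : e * F - F * e = -(((q⁻¹ : Rˣ) : R)) • (g * C))
    (heu : e * u = u * e)
    (hCu : C * u = ((q⁻¹ : Rˣ) : R) • (u * C))
    (hgu : g * u = u * g) :
    e * qComm ((q⁻¹ : Rˣ) : R) F u = qComm ((q⁻¹ : Rˣ) : R) F u * e := by
  generalize ((q⁻¹ : Rˣ) : R) = a at *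
  -- `D = [e, F]` is a multiple of `g * C`, hence `a`-commutes with `u`.
  have hD : (e * F - F * e) * u = a • (u * (e * F - F * e)) := by
    rw [heF, smul_mul_assoc, mul_assoc, hCu, mul_smul_comm, ← mul_assoc, hgu, mul_assoc,
      mul_smul_comm, smul_comm]
  -- Since `e` commutes with `u`, `[e, [F, u]_a] = [D, u]_a = 0`.
  have key : e * qComm a F u - qComm a F u * e
      = (e * F - F * e) * u - a • (u * (e * F - F * e)) := by
    have h1 : e * (u * F) = u * (e * F) := by rw [← mul_assoc, heu, mul_assoc]
    have h2 : F * (u * e) = F * (e * u) := by rw [heu]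
    simp only [qComm, mul_sub, sub_mul, mul_smul_comm, smul_mul_assoc, smul_sub, mul_assoc, h1, h2]
    abel
  rw [← sub_eq_zero, key, hD, sub_self]
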